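/- For n ≥ 1 and subsets I, J of {1,...,n-1}, the number of pairs of permutations (σ, τ) in S_n with στ = id, Des(σ) = I, and Des(τ) = J equals Σ_{λ ⊢ n} d_{λ,I} · d_{λ,J}. -/

import Mathlib

open scoped Classical

noncomputable section

/-- Descent set of a permutation of `Fin n`, as a subset of `{1, ..., n-1}`
(1-indexed: `i` is a descent of `π` iff `π(i) > π(i+1)`). -/
def permDes {n : ℕ} (σ : Equiv.Perm (Fin n)) : Finset ℕ :=
  (Finset.Icc 1 (n - 1)).filter fun i =>
    ∃ h : i < n, σ ⟨i, h⟩ < σ ⟨i - 1, by omega⟩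

/-- Number of entries of a semistandard Young tableau equal to `j`. -/
def ssytWeight {μ : YoungDiagram} (T : SemistandardYoungTableau μ) (j : ℕ) : ℕ :=
  (μ.cells.filter fun c => T c.1 c.2 = j).card

/-- A standard Young tableau with `n` boxes: each of `1, ..., n` appears exactly once. -/
def IsStdYT {μ : YoungDiagram} (n : ℕ) (T : SemistandardYoungTableau μ) : Prop :=
  ∀ k ∈ Finset.Icc 1 n, (μ.cells.filter fun c => T c.1 c.2 = k).card = 1

/-- Descent set of a standard Young tableau: `k` is a descent iff `k+1` lies in
a strictly lower row than `k`. -/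
def sytDes {μ : YoungDiagram} (n : ℕ) (T : SemistandardYoungTableau μ) : Finset ℕ :=
  (Finset.Icc 1 (n - 1)).filter fun k =>
    ∃ c₁ ∈ μ.cells, ∃ c₂ ∈ μ.cells,
      T c₁.1 c₁.2 = k ∧ T c₂.1 c₂.2 = k + 1 ∧ c₁.1 < c₂.1

/-- `d_{λ,I}`: the number of standard Young tableaux of shape `λ` with descent set `I`. -/
def dCoef (μ : YoungDiagram) (n : ℕ) (I : Finset ℕ) : ℕ :=
  Nat.card {T : SemistandardYoungTableau μ // IsStdYT n T ∧ sytDes n T = I}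

/-- The Young diagram of a partition of `n`. -/
def toYD {n : ℕ} (p : n.Partition) : YoungDiagram where
  cells := (Finset.range n ×ˢ Finset.range n).filter fun c =>
    c.1 < (p.parts.filter fun a => c.2 < a).card
  isLowerSet := by
    intro x y hyx hx
    simp only [Finset.coe_filter, Set.mem_setOf_eq, Finset.mem_product,
      Finset.mem_range] at hx ⊢
    obtain ⟨⟨h1, h2⟩, h3⟩ := hx
    refine ⟨⟨lt_of_le_of_lt hyx.1 h1, lt_of_le_of_lt hyx.2 h2⟩,
      lt_of_le_of_lt hyx.1 (lt_of_lt_of_le h3 ?_)⟩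
    exact Multiset.card_le_card
      (Multiset.monotone_filter_right _ fun a ha => lt_of_le_of_lt hyx.2 ha)



/-! ### Local rules -/

/-- Forward local growth rule: new value of the label `b` after crossing the label `a`. -/
def fwd : Option ℕ → Option ℕ → Bool → Option ℕ
  | none, none, true => some 0
  | none, none, false => none
  | none, some _, _ => none
  | some r, none, _ => some r
  | some r, some s, _ => if r = s then some (r + 1) else some r

/-- Backward local growth rule. -/
def bwd : Option ℕ → Option ℕ → Option ℕ
  | none, _ => none
  | some r, none => some r
  | some r, some s => if r = s then (match r with | 0 => none | t + 1 => some t) else some r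

/-- Whether the square is marked, read off the outgoing labels. -/
def mrk : Option ℕ → Option ℕ → Bool
  | some 0, some 0 => true
  | _, _ => false

lemma bwd_fwd (b a : Option ℕ) (x : Bool) (h : x = true → b = none ∧ a = none) :
    bwd (fwd b a x) (fwd a b x) = b := by
  rcases b with _ | r <;> rcases a with _ | s <;> cases x <;> simp_all [fwd, bwd] <;>
    (by_cases hrs : r = s <;> simp_all [eq_comm])

lemma mrk_fwd (b a : Option ℕ) (x : Bool) (h : x = true → b = none ∧ a = none) :
    mrk (fwd b a x) (fwd a b x) = x := by
  rcases b with _ | r <;> rcases a with _ | s <;> cases x <;> simp_all [fwd, mrk]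
  by_cases hrs : r = s
  · simp_all
  · have hsr : ¬ s = r := fun h => hrs h.symm
    simp only [hrs, hsr, if_false]
    rcases r with _ | r <;> rcases s with _ | s <;> simp_all [mrk]

lemma fwd_bwd (b a : Option ℕ) :
    fwd (bwd b a) (bwd a b) (mrk b a) = b := by
  rcases b with _ | r <;> rcases a with _ | s <;> simp [fwd, bwd, mrk]
  by_cases hrs : r = s
  · subst hrs; rcases r with _ | r <;> simp [fwd, mrk]
  · have hsr : ¬ s = r := fun h => hrs h.symm
    simp [hrs, hsr, fwd]

lemma mrk_comm (b a : Option ℕ) : mrk b a = mrk a b := by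
  rcases b with _ | _ | r <;> rcases a with _ | _ | s <;> simp [mrk]

lemma bwd_of_mrk (b a : Option ℕ) (h : mrk b a = true) : bwd b a = none ∧ bwd a b = none := by
  rcases b with _ | _ | r <;> rcases a with _ | _ | s <;> simp_all [mrk, bwd]

/-- Indicator of a label. -/
def ind (a : Option ℕ) (r : ℕ) : ℕ := if a = some r then 1 else 0

lemma ind_none (r : ℕ) : ind none r = 0 := by simp [ind]

lemma ind_some (s r : ℕ) : ind (some s) r = if s = r then 1 else 0 := by simp [ind]

lemma fwd_ind (b a : Option ℕ) (x : Bool) (r : ℕ) :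
    ind a r + ind (fwd b a x) r = ind b r + ind (fwd a b x) r := by
  rcases b with _ | s <;> rcases a with _ | t <;> cases x <;> simp [fwd, ind_none]
  all_goals
    by_cases h : s = t
    · simp [h]
    · simp [h, Ne.symm h, add_comm]

lemma bwd_ind (b a : Option ℕ) (r : ℕ) :
    ind a r + ind (bwd b a) r = ind b r + ind (bwd a b) r := by
  have := fwd_ind (bwd b a) (bwd a b) (mrk b a) r
  rw [fwd_bwd, mrk_comm, fwd_bwd] at this
  omega

lemma fwd_anti (b a : Option ℕ) (x : Bool) (ρ : ℕ → ℕ)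
    (h0 : ∀ r, ρ (r + 1) ≤ ρ r)
    (h1 : ∀ r, ρ (r + 1) + ind b (r + 1) ≤ ρ r + ind b r)
    (h2 : ∀ r, ρ (r + 1) + ind a (r + 1) ≤ ρ r + ind a r) (r : ℕ) :
    ρ (r + 1) + ind b (r + 1) + ind (fwd a b x) (r + 1) ≤
      ρ r + ind b r + ind (fwd a b x) r := by
  replace h0 := h0 r
  replace h1 := h1 r
  replace h2 := h2 r
  rcases b with _ | s <;> rcases a with _ | t
  · cases x <;> simp only [fwd, ind_none, ind_some] at * <;> (try split_ifs at *) <;> omega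
  · simp only [fwd, ind_none, ind_some] at * ; omega
  · simp only [fwd, ind_none, ind_some] at * ; omega
  · by_cases h : t = s
    · subst h
      simp only [fwd, ind_some, if_true] at *
      split_ifs at * <;> omega
    · simp only [fwd, ind_some, if_neg h] at *
      split_ifs at * <;> omega

lemma bwd_anti (b a : Option ℕ) (l : ℕ → ℤ)
    (h0 : ∀ r, l (r + 1) ≤ l r)
    (h1 : ∀ r, l (r + 1) - ind b (r + 1) ≤ l r - ind b r)
    (h2 : ∀ r, l (r + 1) - ind a (r + 1) ≤ l r - ind a r)
    (h3 : ∀ r, 0 ≤ l r - ind b r) (h4 : ∀ r, 0 ≤ l r - ind a r) :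
    (∀ r, l (r + 1) - ind b (r + 1) - ind (bwd a b) (r + 1) ≤
      l r - ind b r - ind (bwd a b) r) ∧ ∀ r, 0 ≤ l r - ind b r - ind (bwd a b) r := by
  constructor
  · intro r
    replace h0 := h0 r
    replace h1 := h1 r
    replace h2 := h2 r
    clear h3 h4
    rcases b with _ | s <;> rcases a with _ | t
    · simp only [bwd, ind_none] at * ; omega
    · simp only [bwd, ind_none] at * ; omega
    · simp only [bwd, ind_none] at * ; omega
    · by_cases h : t = s
      · subst h
        rcases t with _ | t <;> simp only [bwd, ind_some, ind_none, if_true] at * <;>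
          split_ifs at * <;> push_cast at * <;> omega
      · simp only [bwd, ind_some, if_neg h] at *
        split_ifs at * <;> push_cast at * <;> omega
  · intro r
    replace h0 := h0 r
    have h3' := h3 (r + 1)
    have h4' := h4 (r + 1)
    replace h3 := h3 r
    replace h4 := h4 r
    clear h1 h2
    rcases b with _ | s <;> rcases a with _ | t
    · simp only [bwd, ind_none] at * ; omega
    · simp only [bwd, ind_none] at * ; omega
    · simp only [bwd, ind_none] at * ; omega
    · by_cases h : t = s
      · subst h
        rcases t with _ | t <;> simp only [bwd, ind_some, ind_none, if_true] at * <;>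
          split_ifs at * <;> push_cast at * <;> omega
      · simp only [bwd, ind_some, if_neg h] at *
        split_ifs at * <;> push_cast at * <;> omega

lemma exists_grid (q p : ℕ → Option ℕ) (F G : ℕ → ℕ → Option ℕ → Option ℕ → Option ℕ) :
    ∃ H V : ℕ → ℕ → Option ℕ, (∀ i, H i 0 = q i) ∧ (∀ j, V 0 j = p j) ∧
      (∀ i j, H i (j + 1) = F i j (H i j) (V i j)) ∧
      (∀ i j, V (i + 1) j = G i j (V i j) (H i j)) := by
  let hc : ℕ → (ℕ → Option ℕ) → ℕ → Option ℕ := fun i v j =>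
    Nat.rec (q i) (fun k h => F i k h (v k)) j
  let V : ℕ → ℕ → Option ℕ := fun i =>
    Nat.rec p (fun k v => fun j => G k j (v j) (hc k v j)) i
  exact ⟨fun i j => hc i (V i) j, V, fun _ => rfl, fun _ => rfl, fun _ _ => rfl, fun _ _ => rfl⟩

/-- Counting occurrences of a letter in a prefix of a word. -/
def cnt (u : ℕ → Option ℕ) (m r : ℕ) : ℕ := ∑ k ∈ Finset.range m, ind (u k) r

lemma cnt_zero (u : ℕ → Option ℕ) (r : ℕ) : cnt u 0 r = 0 := by simp [cnt]

lemma cnt_succ (u : ℕ → Option ℕ) (m r : ℕ) : cnt u (m + 1) r = cnt u m r + ind (u m) r := by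
  simp [cnt, Finset.sum_range_succ]

/-- Lattice words of length `n`. -/
structure IsW (n : ℕ) (u : ℕ → Option ℕ) : Prop where
  none_iff : ∀ k, u k = none ↔ n ≤ k
  lat : ∀ m r, cnt u m (r + 1) ≤ cnt u m r

/-- Descent set of a word. -/
def wDes (n : ℕ) (u : ℕ → Option ℕ) : Finset ℕ :=
  (Finset.Icc 1 (n - 1)).filter fun i => ∃ r s, u (i - 1) = some r ∧ u i = some s ∧ r < s

/-! ### Growth diagrams -/

/-- Marking of squares by a permutation. -/
def mkk {n : ℕ} (σ : Equiv.Perm (Fin n)) (i j : ℕ) : Bool :=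
  decide (∃ (hi : i < n) (hj : j < n), σ ⟨i, hi⟩ = ⟨j, hj⟩)

lemma mkk_iff {n : ℕ} (σ : Equiv.Perm (Fin n)) (i j : ℕ) :
    mkk σ i j = true ↔ ∃ (hi : i < n) (hj : j < n), σ ⟨i, hi⟩ = ⟨j, hj⟩ := by
  simp [mkk]

lemma mkk_fin {n : ℕ} (σ : Equiv.Perm (Fin n)) (i : Fin n) (j : ℕ) :
    mkk σ i j = true ↔ (σ i : ℕ) = j := by
  rw [mkk_iff]
  constructor
  · rintro ⟨hi, hj, h⟩
    simpa using congrArg Fin.val h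
  · rintro rfl
    exact ⟨i.2, (σ i).2, rfl⟩

lemma mkk_inv {n : ℕ} (σ : Equiv.Perm (Fin n)) (i j : ℕ) : mkk σ⁻¹ i j = mkk σ j i := by
  rw [Bool.eq_iff_iff, mkk_iff, mkk_iff]
  constructor
  · rintro ⟨hi, hj, h⟩
    exact ⟨hj, hi, by rw [← h]; simp⟩
  · rintro ⟨hi, hj, h⟩
    exact ⟨hj, hi, by rw [← h]; simp⟩

/-- Growth diagrams of a permutation. -/
structure IsG {n : ℕ} (σ : Equiv.Perm (Fin n)) (H V : ℕ → ℕ → Option ℕ) : Prop where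
  h0 : ∀ i, H i 0 = none
  v0 : ∀ j, V 0 j = none
  hs : ∀ i j, H i (j + 1) = fwd (H i j) (V i j) (mkk σ i j)
  vs : ∀ i j, V (i + 1) j = fwd (V i j) (H i j) (mkk σ i j)

lemma exists_IsG {n : ℕ} (σ : Equiv.Perm (Fin n)) : ∃ H V, IsG σ H V := by
  obtain ⟨H, V, a, b, c, d⟩ := exists_grid (fun _ => none) (fun _ => none)
    (fun i j h v => fwd h v (mkk σ i j)) (fun i j h v => fwd h v (mkk σ i j))
  exact ⟨H, V, a, b, c, d⟩

/-- Horizontal labels. -/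
def HH {n : ℕ} (σ : Equiv.Perm (Fin n)) : ℕ → ℕ → Option ℕ := (exists_IsG σ).choose

/-- Vertical labels. -/
def VV {n : ℕ} (σ : Equiv.Perm (Fin n)) : ℕ → ℕ → Option ℕ := (exists_IsG σ).choose_spec.choose

lemma isG {n : ℕ} (σ : Equiv.Perm (Fin n)) : IsG σ (HH σ) (VV σ) :=
  (exists_IsG σ).choose_spec.choose_spec

lemma IsG.symm {n : ℕ} {σ : Equiv.Perm (Fin n)} {H V : ℕ → ℕ → Option ℕ} (h : IsG σ H V) :
    IsG σ⁻¹ (fun i j => V j i) (fun i j => H j i) where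
  h0 := h.v0
  v0 := h.h0
  hs := fun i j => by simp only [mkk_inv]; exact h.vs j i
  vs := fun i j => by simp only [mkk_inv]; exact h.hs j i

/-- Uniqueness, on a bounded square. -/
lemma IsG.unique {n : ℕ} {σ : Equiv.Perm (Fin n)} {H V : ℕ → ℕ → Option ℕ} (h : IsG σ H V)
    {H' V' : ℕ → ℕ → Option ℕ} (N : ℕ) (h0 : ∀ i < N, H' i 0 = none) (v0 : ∀ j < N, V' 0 j = none)
    (hs : ∀ i < N, ∀ j < N, H' i (j + 1) = fwd (H' i j) (V' i j) (mkk σ i j))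
    (vs : ∀ i < N, ∀ j < N, V' (i + 1) j = fwd (V' i j) (H' i j) (mkk σ i j)) :
    (∀ i < N, ∀ j ≤ N, H' i j = H i j) ∧ (∀ i ≤ N, ∀ j < N, V' i j = V i j) := by
  have key : ∀ i ≤ N, ∀ j < N, V' i j = V i j := by
    intro i
    induction i with
    | zero => intro _ j hj; rw [v0 j hj, h.v0]
    | succ i ih =>
      intro hi
      have ih := ih (by omega)
      have hH : ∀ j ≤ N, H' i j = H i j := by
        intro j
        induction j with
        | zero => intro _; rw [h0 i (by omega), h.h0]
        | succ j jh =>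
          intro hj
          rw [hs i (by omega) j (by omega), h.hs, jh (by omega), ih j (by omega)]
      intro j hj
      rw [vs i (by omega) j hj, h.vs, hH j hj.le, ih j hj]
  refine ⟨?_, key⟩
  intro i hi j
  induction j with
  | zero => intro _; rw [h0 i hi, h.h0]
  | succ j jh =>
    intro hj
    rw [hs i hi j (by omega), h.hs, jh (by omega), key i hi.le j (by omega)]

lemma VV_eq {n : ℕ} (σ : Equiv.Perm (Fin n)) (i j : ℕ) : VV σ i j = HH σ⁻¹ j i := by
  have h := (isG σ).symm
  have := (IsG.unique (isG σ⁻¹) (H' := fun i j => VV σ j i) (V' := fun i j => HH σ j i) (i + j + 1) (fun i _ => h.h0 i) (fun i _ => h.v0 i)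
    (fun i _ j _ => h.hs i j) (fun i _ j _ => h.vs i j)).1 j (by omega) i (by omega)
  exact this

lemma fwd_none_iff (b a : Option ℕ) (x : Bool) :
    fwd b a x = none ↔ b = none ∧ ¬ (a = none ∧ x = true) := by
  rcases b with _ | r <;> rcases a with _ | s <;> cases x <;> simp [fwd]
  all_goals split_ifs <;> simp

/-- If no mark was crossed, the label is `none`. -/
lemma HH_none_of {n : ℕ} (σ : Equiv.Perm (Fin n)) (i j : ℕ)
    (h : ∀ j' < j, mkk σ i j' = false) : HH σ i j = none := by
  induction j with
  | zero => exact (isG σ).h0 i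
  | succ j ih =>
    rw [(isG σ).hs, fwd_none_iff]
    exact ⟨ih fun j' hj' => h j' (by omega), by simp [h j]⟩

lemma HH_none_of_mk {n : ℕ} (σ : Equiv.Perm (Fin n)) (i j : ℕ) (h : mkk σ i j = true) :
    HH σ i j = none := by
  apply HH_none_of
  intro j' hj'
  by_contra hc
  rw [Bool.not_eq_false, mkk_iff] at hc
  rw [mkk_iff] at h
  obtain ⟨_, _, h⟩ := h
  obtain ⟨_, _, h'⟩ := hc
  rw [h] at h'
  simp at h'
  omega

lemma VV_none_of_mk {n : ℕ} (σ : Equiv.Perm (Fin n)) (i j : ℕ) (h : mkk σ i j = true) :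
    VV σ i j = none := by
  rw [VV_eq]
  apply HH_none_of_mk
  rwa [mkk_inv]

lemma HH_none_iff {n : ℕ} (σ : Equiv.Perm (Fin n)) (i : Fin n) (j : ℕ) :
    HH σ i j = none ↔ j ≤ σ i := by
  constructor
  · intro h
    by_contra hc
    push Not at hc
    revert h hc
    induction j with
    | zero => simp
    | succ j ih =>
      intro h hj
      rw [(isG σ).hs, fwd_none_iff] at h
      rcases Nat.lt_or_ge (σ i) j with hlt | hge
      · exact ih h.1 hlt
      · have : (σ i : ℕ) = j := by omega
        have hm := (mkk_fin σ i j).2 this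
        exact h.2 ⟨VV_none_of_mk σ _ _ hm, hm⟩
  · intro h
    apply HH_none_of
    intro j' hj'
    by_contra hc
    rw [Bool.not_eq_false, mkk_fin] at hc
    omega

/-- The recording word. -/
def top {n : ℕ} (σ : Equiv.Perm (Fin n)) (i : ℕ) : Option ℕ := HH σ i n

lemma top_none_iff {n : ℕ} (σ : Equiv.Perm (Fin n)) (i : ℕ) : top σ i = none ↔ n ≤ i := by
  rcases Nat.lt_or_ge i n with h | h
  · have := HH_none_iff σ ⟨i, h⟩ n
    have h2 := (σ ⟨i, h⟩).2
    simp only [top] at *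
    rw [this]; omega
  · simp only [h, iff_true]
    apply HH_none_of
    intro j' _
    by_contra hc
    rw [Bool.not_eq_false, mkk_iff] at hc
    obtain ⟨hi, _⟩ := hc
    omega

lemma cnt_HH_succ {n : ℕ} (σ : Equiv.Perm (Fin n)) (i j r : ℕ) :
    cnt (fun k => HH σ k (j + 1)) i r = cnt (fun k => HH σ k j) i r + ind (VV σ i j) r := by
  induction i with
  | zero => simp [cnt_zero, (isG σ).v0, ind_none]
  | succ i ih =>
    rw [cnt_succ, cnt_succ, ih, (isG σ).vs, (isG σ).hs]
    have := fwd_ind (HH σ i j) (VV σ i j) (mkk σ i j) r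
    omega

lemma cnt_HH_eq {n : ℕ} (σ : Equiv.Perm (Fin n)) (i j r : ℕ) :
    cnt (fun k => HH σ k j) i r = cnt (fun k => VV σ i k) j r := by
  induction j with
  | zero => simp [cnt_zero, (isG σ).h0]; simp [cnt, ind_none]
  | succ j ih => rw [cnt_HH_succ, ih, cnt_succ]

lemma cnt_top_inv {n : ℕ} (σ : Equiv.Perm (Fin n)) : cnt (top σ⁻¹) n = cnt (top σ) n := by
  funext r
  have := cnt_HH_eq σ n n r
  simp only [VV_eq] at this
  exact this.symm

lemma cnt_HH_anti {n : ℕ} (σ : Equiv.Perm (Fin n)) (i j r : ℕ) :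
    cnt (fun k => HH σ k j) i (r + 1) ≤ cnt (fun k => HH σ k j) i r := by
  induction i generalizing j r with
  | zero => simp [cnt_zero]
  | succ i ih =>
    induction j generalizing r with
    | zero => simp [(isG σ).h0]; simp [cnt, ind_none]
    | succ j jh =>
      rw [cnt_HH_succ, cnt_HH_succ, cnt_succ, cnt_succ, (isG σ).vs]
      refine fwd_anti _ _ _ (fun r => cnt (fun k => HH σ k j) i r) (ih j) ?_ ?_ r
      · intro r
        have := jh r
        rwa [cnt_succ, cnt_succ] at this
      · intro r
        have := ih (j + 1) r
        rwa [cnt_HH_succ, cnt_HH_succ] at this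

lemma isW_top {n : ℕ} (σ : Equiv.Perm (Fin n)) : IsW n (top σ) :=
  ⟨top_none_iff σ, fun m r => cnt_HH_anti σ m n r⟩

/-! ### Descents -/

lemma des_aux {n : ℕ} (σ : Equiv.Perm (Fin n)) (k : ℕ) (hk : k + 1 < n) (j r s : ℕ)
    (hr : HH σ k j = some r) (hs : HH σ (k + 1) j = some s) :
    σ ⟨k + 1, hk⟩ < σ ⟨k, by omega⟩ ↔ r < s := by
  induction j generalizing r s with
  | zero => simp [(isG σ).h0] at hr
  | succ j ih =>
    have e0 := HH_none_iff σ ⟨k, by omega⟩ j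
    have e1 := HH_none_iff σ ⟨k + 1, hk⟩ j
    have m0 := mkk_fin σ ⟨k, by omega⟩ j
    have m1 := mkk_fin σ ⟨k + 1, hk⟩ j
    have v0 := VV_none_of_mk σ k j
    have v1 := VV_none_of_mk σ (k + 1) j
    rw [(isG σ).hs] at hr hs
    rw [(isG σ).vs] at hs v1
    simp only at e0 e1 m0 m1
    simp only [Fin.lt_def] at ih ⊢
    generalize mkk σ k j = x at *
    generalize mkk σ (k + 1) j = y at *
    generalize VV σ k j = a at *
    generalize HH σ k j = b at *
    generalize HH σ (k + 1) j = c at *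
    generalize (σ ⟨k, _⟩ : ℕ) = s0 at *
    generalize (σ ⟨k + 1, hk⟩ : ℕ) = s1 at *
    rcases b with _ | r'
    · rcases a with _ | t
      · cases x
        · simp [fwd] at hr
        · simp [fwd] at hr m0 e0 hs v1
          subst hr
          subst m0
          rcases c with _ | s'
          · simp [fwd] at hs
          · simp only [fwd] at hs
            simp at e1
            simp only [e1, true_iff]
            split_ifs at hs <;> simp at hs <;> omega
      · simp [fwd] at hr
    · rcases c with _ | s'
      · rw [fwd.eq_def] at hs
        rcases a with _ | t
        · cases y
          · simp [fwd] at hs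
          · simp [fwd] at hs hr m1 e0 e1
            omega
        · simp only [fwd] at hs
          split_ifs at hs <;> simp at hs
      · have ih := ih r' s' rfl rfl
        rw [ih]
        rcases a with _ | t
        · simp [fwd] at hr hs
          omega
        · simp only [fwd] at hr hs
          split_ifs at hr hs <;> simp only [fwd] at hs <;> split_ifs at hs <;> simp at hr hs <;> omega

lemma wDes_top {n : ℕ} (σ : Equiv.Perm (Fin n)) : wDes n (top σ) = permDes σ := by
  unfold wDes permDes
  apply Finset.filter_congr
  intro i hi
  rw [Finset.mem_Icc] at hi
  obtain ⟨k, rfl⟩ : ∃ k, i = k + 1 := ⟨i - 1, by omega⟩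
  have hk : k + 1 < n := by omega
  simp only [Nat.add_sub_cancel]
  have hr : ∃ r, top σ k = some r := by
    rw [← Option.ne_none_iff_exists']
    intro h
    rw [top_none_iff] at h
    omega
  have hs : ∃ s, top σ (k + 1) = some s := by
    rw [← Option.ne_none_iff_exists']
    intro h
    rw [top_none_iff] at h
    omega
  obtain ⟨r, hr⟩ := hr
  obtain ⟨s, hs⟩ := hs
  have := des_aux σ k hk n r s hr hs
  constructor
  · rintro ⟨r', s', h1, h2, h3⟩
    rw [hr] at h1
    rw [hs] at h2
    simp at h1 h2
    exact ⟨hk, this.2 (by omega)⟩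
  · rintro ⟨_, h⟩
    exact ⟨r, s, hr, hs, this.1 h⟩

/-! ### Injectivity -/

lemma HH_bwd {n : ℕ} (σ : Equiv.Perm (Fin n)) (i j : ℕ) :
    HH σ i j = bwd (HH σ i (j + 1)) (VV σ (i + 1) j) := by
  rw [(isG σ).hs, (isG σ).vs, bwd_fwd]
  exact fun h => ⟨HH_none_of_mk σ i j h, VV_none_of_mk σ i j h⟩

lemma VV_bwd {n : ℕ} (σ : Equiv.Perm (Fin n)) (i j : ℕ) :
    VV σ i j = bwd (VV σ (i + 1) j) (HH σ i (j + 1)) := by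
  rw [(isG σ).hs, (isG σ).vs, bwd_fwd]
  exact fun h => ⟨VV_none_of_mk σ i j h, HH_none_of_mk σ i j h⟩

lemma mkk_bwd {n : ℕ} (σ : Equiv.Perm (Fin n)) (i j : ℕ) :
    mkk σ i j = mrk (HH σ i (j + 1)) (VV σ (i + 1) j) := by
  rw [(isG σ).hs, (isG σ).vs, mrk_fwd]
  exact fun h => ⟨HH_none_of_mk σ i j h, VV_none_of_mk σ i j h⟩

lemma top_inj {n : ℕ} (σ τ : Equiv.Perm (Fin n)) (h : top σ = top τ) (h' : top σ⁻¹ = top τ⁻¹) :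
    σ = τ := by
  have key : ∀ k ≤ n, (∀ l ≤ n, VV σ (n - k) (n - l) = VV τ (n - k) (n - l)) ∧
      ∀ l ≤ n, 1 ≤ k → HH σ (n - k) (n - l) = HH τ (n - k) (n - l) := by
    intro k
    induction k with
    | zero =>
      intro _
      refine ⟨?_, by simp⟩
      intro l hl
      simp only [VV_eq, Nat.sub_zero]
      exact congrFun h' (n - l)
    | succ k ih =>
      intro hk
      have ih := (ih (by omega)).1
      have e : n - k = n - (k + 1) + 1 := by omega
      have hH : ∀ l ≤ n, HH σ (n - (k + 1)) (n - l) = HH τ (n - (k + 1)) (n - l) := by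
        intro l
        induction l with
        | zero => intro _; exact congrFun h _
        | succ l lh =>
          intro hl
          rw [HH_bwd σ, HH_bwd τ]
          have e' : n - (l + 1) + 1 = n - l := by omega
          rw [e', lh (by omega), ← e, ih (l + 1) hl]
      refine ⟨?_, fun l hl _ => hH l hl⟩
      intro l hl
      rcases l with _ | l
      · have a := top_none_iff σ⁻¹ n
        rw [VV_eq, VV_eq, HH_none_of, HH_none_of]
        all_goals
          intro j' _
          by_contra hc
          rw [Bool.not_eq_false, mkk_iff] at hc
          obtain ⟨hi, _⟩ := hc
          omega
      · rw [VV_bwd σ, VV_bwd τ]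
        have e' : n - (l + 1) + 1 = n - l := by omega
        rw [e', ← e, hH l (by omega), ih (l + 1) hl]
  ext i
  rw [eq_comm, ← mkk_fin]
  have hi := i.2
  have hm := (mkk_fin σ i (σ i)).2 rfl
  have hsi := (σ i).2
  generalize (σ i : ℕ) = j at *
  rw [mkk_bwd] at hm ⊢
  have a1 := (key (n - i) (by omega)).2 (n - (j + 1)) (by omega) (by omega)
  have a2 := (key (n - (i + 1)) (by omega)).1 (n - j) (by omega)
  have e1 : n - (n - (i : ℕ)) = i := by omega
  have e2 : n - (n - (j + 1)) = j + 1 := by omega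
  have e3 : n - (n - ((i : ℕ) + 1)) = i + 1 := by omega
  have e4 : n - (n - j) = j := by omega
  rw [e1, e2] at a1
  rw [e3, e4] at a2
  rwa [← a1, ← a2]


/-! ### Surjectivity -/

lemma ind_eq_zero {a : Option ℕ} (h : ∀ r, ind a r = 0) : a = none := by
  rcases a with _ | s
  · rfl
  · have := h s
    simp [ind] at this

lemma exists_back (n : ℕ) (q p : ℕ → Option ℕ) (hq : IsW n q) (hp : IsW n p)
    (hc : cnt q n = cnt p n) :
    ∃ H V : ℕ → ℕ → Option ℕ, (∀ i, H i 0 = q (n - 1 - i)) ∧ (∀ j, V 0 j = p (n - 1 - j)) ∧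
      (∀ i j, H i (j + 1) = bwd (H i j) (V i j)) ∧
      (∀ i j, V (i + 1) j = bwd (V i j) (H i j)) ∧
      (∀ i < n, H i n = none) ∧ (∀ j < n, V n j = none) := by
  obtain ⟨H, V, h0, v0, hs, vs⟩ := exists_grid (fun i => q (n - 1 - i)) (fun j => p (n - 1 - j))
    (fun _ _ h v => bwd h v) (fun _ _ h v => bwd h v)
  refine ⟨H, V, h0, v0, hs, vs, ?_⟩
  let S : ℕ → ℕ → ℕ → ℤ := fun i j r => (cnt q (n - i) r : ℤ) - cnt (V i) j r
  have S1 : ∀ i j r, S i (j + 1) r = S i j r - ind (V i j) r := by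
    intro i j r
    simp only [S, cnt_succ]; push_cast; ring
  have S2 : ∀ i < n, ∀ j r, S (i + 1) j r = S i j r - ind (H i j) r := by
    intro i hi j r
    induction j with
    | zero =>
      simp only [S, cnt_zero, h0]
      have e : n - i = n - (i + 1) + 1 := by omega
      have e' : n - 1 - i = n - (i + 1) := by omega
      rw [e, cnt_succ, e']; push_cast; ring
    | succ j ih =>
      rw [S1, S1, ih, hs, vs]
      have := bwd_ind (H i j) (V i j) r
      omega
  have S3 : ∀ j ≤ n, ∀ r, S 0 j r = cnt p (n - j) r := by
    intro j
    induction j with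
    | zero => intro _ r; simp [S, cnt_zero, hc]
    | succ j ih =>
      intro hj r
      rw [S1, ih (by omega), v0]
      have e : n - j = n - (j + 1) + 1 := by omega
      have e' : n - 1 - j = n - (j + 1) := by omega
      rw [e, cnt_succ, e']; push_cast; ring
  have key : ∀ i ≤ n, ∀ j ≤ n, (∀ r, S i j (r + 1) ≤ S i j r) ∧ ∀ r, 0 ≤ S i j r := by
    intro i
    induction i with
    | zero =>
      intro _ j hj
      constructor
      · intro r
        rw [S3 j hj, S3 j hj]
        exact_mod_cast hp.lat _ r
      · intro r
        rw [S3 j hj]; positivity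
    | succ i ih =>
      intro hi j
      induction j with
      | zero =>
        intro _
        constructor
        · intro r
          simp only [S, cnt_zero]
          have := hq.lat (n - (i + 1)) r
          push_cast; omega
        · intro r
          simp [S, cnt_zero]
      | succ j jh =>
        intro hj
        have a0 := ih (by omega) j (by omega)
        have a1 := jh (by omega)
        have a2 := ih (by omega) (j + 1) hj
        simp only [S2 i (by omega)] at a1
        simp only [S1 i] at a2
        have := bwd_anti (H i j) (V i j) (S i j) a0.1 a1.1 a2.1 a1.2 a2.2
        simp only [S1 (i + 1), S2 i (show i < n by omega), vs]
        exact this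
  constructor
  · have hz : ∀ i ≤ n, ∀ r, S i n r = 0 := by
      intro i
      induction i with
      | zero => intro _ r; rw [S3 n le_rfl]; simp [cnt_zero]
      | succ i ih =>
        intro hi r
        have a := (key (i + 1) hi n le_rfl).2 r
        have b := S2 i (by omega) n r
        have c := ih (by omega) r
        omega
    intro i hi
    apply ind_eq_zero
    intro r
    have a := S2 i hi n r
    rw [hz i hi.le, hz (i + 1) hi] at a
    omega
  · have hz : ∀ j ≤ n, ∀ r, S n j r = 0 := by
      intro j
      induction j with
      | zero => intro _ r; simp [S, cnt_zero]
      | succ j ih =>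
        intro hj r
        have a := (key n le_rfl (j + 1) hj).2 r
        have b := S1 n j r
        have c := ih (by omega) r
        omega
    intro j hj
    apply ind_eq_zero
    intro r
    have a := S1 n j r
    rw [hz j hj.le, hz (j + 1) hj] at a
    omega

lemma exists_jump (n : ℕ) (f : ℕ → Option ℕ) (h0 : f 0 = none) (hn : f n ≠ none) :
    ∃ j < n, f j = none ∧ f (j + 1) ≠ none := by
  induction n with
  | zero => exact absurd h0 hn
  | succ n ih =>
    by_cases h : f n = none
    · exact ⟨n, by omega, h, hn⟩
    · obtain ⟨j, hj, h⟩ := ih h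
      exact ⟨j, by omega, h⟩

lemma persist (n : ℕ) (f : ℕ → Option ℕ) (h : ∀ j < n, f (j + 1) = none → f j = none)
    (j j' : ℕ) (hj : f (j + 1) ≠ none) (hjj : j < j') (hj' : j' ≤ n) : f j' ≠ none := by
  induction j' with
  | zero => omega
  | succ k ih =>
    rcases Nat.lt_or_ge j k with hlt | hge
    · intro hk
      exact ih hlt (by omega) (h k (by omega) hk)
    · have : j = k := by omega
      rwa [← this]

lemma top_surj (n : ℕ) (q p : ℕ → Option ℕ) (hq : IsW n q) (hp : IsW n p)
    (hc : cnt q n = cnt p n) : ∃ σ : Equiv.Perm (Fin n), top σ = q ∧ top σ⁻¹ = p := by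
  obtain ⟨H', V', h0, v0, hs, vs, hn, vn⟩ := exists_back n q p hq hp hc
  let H : ℕ → ℕ → Option ℕ := fun i j => H' (n - 1 - i) (n - j)
  let V : ℕ → ℕ → Option ℕ := fun i j => V' (n - i) (n - 1 - j)
  let x : ℕ → ℕ → Bool := fun i j => mrk (H i (j + 1)) (V (i + 1) j)
  have Hb : ∀ i < n, ∀ j < n, H i j = bwd (H i (j + 1)) (V (i + 1) j) := by
    intro i hi j hj
    have e1 : n - j = n - (j + 1) + 1 := by omega
    have e2 : n - 1 - i = n - (i + 1) := by omega
    have e3 : n - 1 - j = n - (j + 1) := by omega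
    simp only [H, V]
    rw [e1, hs, e2, e3]
  have Vb : ∀ i < n, ∀ j < n, V i j = bwd (V (i + 1) j) (H i (j + 1)) := by
    intro i hi j hj
    have e1 : n - i = n - (i + 1) + 1 := by omega
    have e2 : n - 1 - i = n - (i + 1) := by omega
    have e3 : n - 1 - j = n - (j + 1) := by omega
    simp only [H, V]
    rw [e1, vs, e2, e3]
  have Hf : ∀ i < n, ∀ j < n, H i (j + 1) = fwd (H i j) (V i j) (x i j) := by
    intro i hi j hj
    rw [Hb i hi j hj, Vb i hi j hj]
    exact (fwd_bwd _ _).symm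
  have Vf : ∀ i < n, ∀ j < n, V (i + 1) j = fwd (V i j) (H i j) (x i j) := by
    intro i hi j hj
    rw [Hb i hi j hj, Vb i hi j hj]
    simp only [x]
    rw [mrk_comm]
    exact (fwd_bwd _ _).symm
  have xn : ∀ i < n, ∀ j < n, x i j = true → H i j = none ∧ V i j = none := by
    intro i hi j hj hx
    rw [Hb i hi j hj, Vb i hi j hj]
    exact bwd_of_mrk _ _ hx
  have xs : ∀ i j, x i j = true → H i (j + 1) ≠ none ∧ V (i + 1) j ≠ none := by
    intro i j hx
    simp only [x] at hx
    constructor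
    · intro h
      rw [h] at hx; simp [mrk] at hx
    · intro h
      rw [mrk_comm, h] at hx; simp [mrk] at hx
  have Hz : ∀ i < n, H i 0 = none := by
    intro i hi
    exact hn _ (by omega)
  have Vz : ∀ j < n, V 0 j = none := by
    intro i hi
    exact vn _ (by omega)
  have Htop : ∀ i < n, H i n = q i := by
    intro i hi
    simp only [H, Nat.sub_self, h0]
    congr 1; omega
  have Vtop : ∀ j < n, V n j = p j := by
    intro i hi
    simp only [V, Nat.sub_self, v0]
    congr 1; omega
  have ex : ∀ i : Fin n, ∃ j : Fin n, x i j = true := by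
    intro i
    obtain ⟨j, hj, h1, h2⟩ := exists_jump n (H i) (Hz i i.2) (by
      rw [Htop i i.2, Ne, hq.none_iff]; have := i.2; omega)
    refine ⟨⟨j, hj⟩, ?_⟩
    rw [Hf i i.2 j hj, Ne, fwd_none_iff] at h2
    tauto
  choose f hf using ex
  have uH : ∀ i < n, ∀ j < n, ∀ j' < n, x i j = true → x i j' = true → ¬ j < j' := by
    intro i hi j hj j' hj' h1 h2 hlt
    refine persist n (H i) ?_ j j' (xs i j h1).1 hlt hj'.le (xn i hi j' hj' h2).1
    intro k hk h
    rw [Hf i hi k hk, fwd_none_iff] at h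
    exact h.1
  have uV : ∀ j < n, ∀ i < n, ∀ i' < n, x i j = true → x i' j = true → ¬ i < i' := by
    intro j hj i hi i' hi' h1 h2 hlt
    refine persist n (fun i => V i j) ?_ i i' (xs i j h1).2 hlt hi'.le (xn i' hi' j hj h2).2
    intro k hk h
    rw [Vf k hk j hj, fwd_none_iff] at h
    exact h.1
  have finj : Function.Injective f := by
    intro a b hab
    have h1 := hf a
    have h2 := hf b
    rw [← hab] at h2
    have l1 := uV (f a) (f a).2 a a.2 b b.2 h1 h2
    have l2 := uV (f a) (f a).2 b b.2 a a.2 h2 h1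
    ext; omega
  let σ : Equiv.Perm (Fin n) := Equiv.ofBijective f (Finite.injective_iff_bijective.1 finj)
  have hσ : ∀ i < n, ∀ j < n, x i j = mkk σ i j := by
    intro i hi j hj
    rw [Bool.eq_iff_iff]
    have := mkk_fin σ ⟨i, hi⟩ j
    simp only at this
    rw [this]
    have hfi := hf ⟨i, hi⟩
    change _ ↔ (f ⟨i, hi⟩ : ℕ) = j
    constructor
    · intro h
      have l1 := uH i hi j hj _ (f ⟨i, hi⟩).2 h hfi
      have l2 := uH i hi _ (f ⟨i, hi⟩).2 j hj hfi h
      omega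
    · intro h
      rw [← h]; exact hfi
  have un := IsG.unique (isG σ) (H' := H) (V' := V) n Hz Vz
    (fun i hi j hj => by rw [← hσ i hi j hj]; exact Hf i hi j hj)
    (fun i hi j hj => by rw [← hσ i hi j hj]; exact Vf i hi j hj)
  refine ⟨σ, ?_, ?_⟩
  · funext i
    rcases Nat.lt_or_ge i n with hi | hi
    · rw [← Htop i hi, un.1 i hi n le_rfl]; rfl
    · rw [(top_none_iff σ i).2 hi, (hq.none_iff i).2 hi]
  · funext j
    rcases Nat.lt_or_ge j n with hi | hi
    · rw [← Vtop j hi, un.2 n le_rfl j hi, VV_eq]; rfl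
    · rw [(top_none_iff _ j).2 hi, (hp.none_iff j).2 hi]


/-! ### Standard tableaux and lattice words -/

section Tableaux

variable {μ : YoungDiagram} {n : ℕ}

/-- The word of a tableau: the row of each entry. -/
def wd (T : SemistandardYoungTableau μ) (k : ℕ) : Option ℕ :=
  if h : ∃ r c, (r, c) ∈ μ ∧ T r c = k + 1 then some h.choose else none

lemma std_range (T : SemistandardYoungTableau μ) (hμ : μ.cells.card = n) (hT : IsStdYT n T)
    {r c : ℕ} (h : (r, c) ∈ μ) : 1 ≤ T r c ∧ T r c ≤ n := by
  have h1 : (μ.cells.filter fun c => T c.1 c.2 ∈ Finset.Icc 1 n).card = n := by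
    rw [Finset.card_eq_sum_card_fiberwise (f := fun c => T c.1 c.2) (t := Finset.Icc 1 n)]
    · rw [Finset.sum_congr rfl (g := fun _ => 1)]
      · simp
      · intro k hk
        refine Eq.trans ?_ (hT k hk)
        rw [Finset.filter_filter]
        congr 1
        apply Finset.filter_congr
        intro x _
        constructor
        · exact fun h => h.2
        · exact fun h => ⟨by rw [h]; exact hk, h⟩
    · intro x hx
      simpa using (Finset.mem_filter.1 hx).2
  have h2 := Finset.eq_of_subset_of_card_le (Finset.filter_subset (fun c => T c.1 c.2 ∈ Finset.Icc 1 n) μ.cells)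
    (by rw [h1, hμ])
  have h3 : (r, c) ∈ μ.cells := h
  rw [← h2, Finset.mem_filter] at h3
  simpa using h3.2

lemma std_unique (T : SemistandardYoungTableau μ) (hμ : μ.cells.card = n) (hT : IsStdYT n T)
    {r c r' c' : ℕ} (h : (r, c) ∈ μ) (h' : (r', c') ∈ μ) (e : T r c = T r' c') :
    r = r' ∧ c = c' := by
  have h1 := std_range T hμ hT h
  have h2 := hT (T r c) (Finset.mem_Icc.2 h1)
  rw [Finset.card_eq_one] at h2
  obtain ⟨a, ha⟩ := h2
  have m1 : (r, c) ∈ ({a} : Finset (ℕ × ℕ)) := by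
    rw [← ha, Finset.mem_filter]; exact ⟨h, rfl⟩
  have m2 : (r', c') ∈ ({a} : Finset (ℕ × ℕ)) := by
    rw [← ha, Finset.mem_filter]; exact ⟨h', e.symm⟩
  rw [Finset.mem_singleton] at m1 m2
  rw [← m2] at m1
  simpa using m1

lemma wd_iff (T : SemistandardYoungTableau μ) (hμ : μ.cells.card = n) (hT : IsStdYT n T)
    (k r : ℕ) : wd T k = some r ↔ ∃ c, (r, c) ∈ μ ∧ T r c = k + 1 := by
  unfold wd
  split_ifs with h
  · have hs := h.choose_spec
    obtain ⟨c, hc, e⟩ := hs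
    rw [Option.some_inj]
    constructor
    · intro h'
      rw [← h']
      exact ⟨c, hc, e⟩
    · rintro ⟨c', hc', e'⟩
      exact (std_unique T hμ hT hc hc' (e.trans e'.symm)).1
  · constructor
    · intro h'; simp at h'
    · rintro ⟨c, hc⟩
      exact absurd ⟨r, c, hc⟩ h

lemma wd_none_iff (T : SemistandardYoungTableau μ) (hμ : μ.cells.card = n) (hT : IsStdYT n T)
    (k : ℕ) : wd T k = none ↔ n ≤ k := by
  constructor
  · intro h
    by_contra hk
    have h2 := hT (k + 1) (Finset.mem_Icc.2 (by omega))
    rw [Finset.card_eq_one] at h2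
    obtain ⟨a, ha⟩ := h2
    have m : a ∈ ({a} : Finset (ℕ × ℕ)) := Finset.mem_singleton_self a
    rw [← ha, Finset.mem_filter] at m
    have := (wd_iff T hμ hT k a.1).2 ⟨a.2, m.1, m.2⟩
    rw [h] at this
    simp at this
  · intro hk
    rw [Option.eq_none_iff_forall_ne_some]
    intro r hr
    rw [wd_iff T hμ hT] at hr
    obtain ⟨c, hc, e⟩ := hr
    have := std_range T hμ hT hc
    omega

lemma wd_cnt (T : SemistandardYoungTableau μ) (hμ : μ.cells.card = n) (hT : IsStdYT n T)
    (m r : ℕ) : cnt (wd T) m r ≤ μ.rowLen r ∧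
      ∀ c, (r, c) ∈ μ → (T r c ≤ m ↔ c < cnt (wd T) m r) := by
  induction m with
  | zero =>
    refine ⟨by simp [cnt_zero], ?_⟩
    intro c hc
    have := std_range T hμ hT hc
    simp only [cnt_zero]
    omega
  | succ m ih =>
    obtain ⟨ih1, ih2⟩ := ih
    rw [cnt_succ]
    by_cases h : wd T m = some r
    · have hi : ind (wd T m) r = 1 := by simp [ind, h]
      rw [hi]
      rw [wd_iff T hμ hT] at h
      obtain ⟨c0, hc0, e0⟩ := h
      have l1 : ¬ c0 < cnt (wd T) m r := by
        rw [← ih2 c0 hc0]; omega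
      have l0 := YoungDiagram.mem_iff_lt_rowLen.1 hc0
      have l2 : ¬ cnt (wd T) m r < c0 := by
        intro hlt
        have hm : (r, cnt (wd T) m r) ∈ μ := YoungDiagram.mem_iff_lt_rowLen.2 (by omega)
        have w := T.row_weak hlt hc0
        have ne : T r (cnt (wd T) m r) ≠ T r c0 := fun e => by
          have := (std_unique T hμ hT hm hc0 e).2
          omega
        have := (ih2 _ hm).1 (by omega)
        omega
      refine ⟨by omega, ?_⟩
      intro c hc
      have a := ih2 c hc
      by_cases hcc : c = c0
      · subst hcc; omega
      · have ne : T r c ≠ T r c0 := fun e => hcc (std_unique T hμ hT hc hc0 e).2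
        omega
    · have hi : ind (wd T m) r = 0 := by simp [ind, h]
      rw [hi]
      refine ⟨by omega, ?_⟩
      intro c hc
      have a := ih2 c hc
      have ne : T r c ≠ m + 1 := fun e => h ((wd_iff T hμ hT m r).2 ⟨c, hc, e⟩)
      omega

lemma wd_isW (T : SemistandardYoungTableau μ) (hμ : μ.cells.card = n) (hT : IsStdYT n T) :
    IsW n (wd T) := by
  refine ⟨wd_none_iff T hμ hT, ?_⟩
  intro m r
  by_contra hlt
  push Not at hlt
  have a := wd_cnt T hμ hT m (r + 1)
  have b := wd_cnt T hμ hT m r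
  have hm : (r + 1, cnt (wd T) m r) ∈ μ := YoungDiagram.mem_iff_lt_rowLen.2 (by omega)
  have hm' : (r, cnt (wd T) m r) ∈ μ := μ.up_left_mem (by omega) le_rfl hm
  have c1 := (a.2 _ hm).2 hlt
  have c2 := T.col_strict (show r < r + 1 by omega) hm
  have := (b.2 _ hm').1 (by omega)
  omega

lemma wd_shape (T : SemistandardYoungTableau μ) (hμ : μ.cells.card = n) (hT : IsStdYT n T) :
    cnt (wd T) n = μ.rowLen := by
  funext r
  have a := wd_cnt T hμ hT n r
  by_contra hne
  have hm : (r, cnt (wd T) n r) ∈ μ := YoungDiagram.mem_iff_lt_rowLen.2 (by omega)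
  have := (a.2 _ hm).1 (std_range T hμ hT hm).2
  omega

lemma wd_inj (T T' : SemistandardYoungTableau μ) (hμ : μ.cells.card = n) (hT : IsStdYT n T)
    (hT' : IsStdYT n T') (h : wd T = wd T') : T = T' := by
  ext r c
  by_cases hm : (r, c) ∈ μ
  · have a := fun m => (wd_cnt T hμ hT m r).2 c hm
    have b := fun m => (wd_cnt T' hμ hT' m r).2 c hm
    rw [← h] at b
    apply le_antisymm
    · rw [a, ← b]
    · rw [b, ← a]
  · rw [T.zeros hm, T'.zeros hm]

lemma wd_des (T : SemistandardYoungTableau μ) (hμ : μ.cells.card = n) (hT : IsStdYT n T) :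
    wDes n (wd T) = sytDes n T := by
  unfold wDes sytDes
  apply Finset.filter_congr
  intro i hi
  rw [Finset.mem_Icc] at hi
  have e : i - 1 + 1 = i := by omega
  simp only [wd_iff T hμ hT, e]
  constructor
  · rintro ⟨r, s, ⟨c, hc, e1⟩, ⟨d, hd, e2⟩, h⟩
    exact ⟨(r, c), hc, (s, d), hd, e1, e2, h⟩
  · rintro ⟨c, hc, d, hd, e1, e2, h⟩
    exact ⟨c.1, d.1, ⟨c.2, hc, e1⟩, ⟨d.2, hd, e2⟩, h⟩

lemma cnt_mono (u : ℕ → Option ℕ) (r : ℕ) : Monotone fun m => cnt u m r := by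
  apply monotone_nat_of_le_succ
  intro m
  simp only [cnt_succ]
  omega

lemma wd_surj (u : ℕ → Option ℕ) (hu : IsW n u) (hc : cnt u n = μ.rowLen) :
    ∃ T : SemistandardYoungTableau μ, IsStdYT n T ∧ ∀ k r, u k = some r ↔
      ∃ c, (r, c) ∈ μ ∧ T r c = k + 1 := by
  have ex : ∀ r c, ∃ m, (r, c) ∈ μ → ∀ m', m ≤ m' ↔ c < cnt u m' r := by
    intro r c
    by_cases hm : (r, c) ∈ μ
    · have hx : ∃ m, c < cnt u m r := by
        refine ⟨n, ?_⟩
        rw [hc]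
        exact YoungDiagram.mem_iff_lt_rowLen.1 hm
      refine ⟨Nat.find hx, fun _ m' => ?_⟩
      rw [Nat.find_le_iff]
      constructor
      · rintro ⟨m, h1, h2⟩
        exact lt_of_lt_of_le h2 (cnt_mono u r h1)
      · intro h
        exact ⟨m', le_rfl, h⟩
    · exact ⟨0, fun h => absurd h hm⟩
  choose f hf using ex
  have anti : ∀ m, Antitone (cnt u m) := fun m => antitone_nat_of_succ_le (hu.lat m)
  have fpos : ∀ r c, (r, c) ∈ μ → f r c ≠ 0 := by
    intro r c hm h0
    have := (hf r c hm 0).1 (by omega)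
    simp [cnt_zero] at this
  have feq : ∀ r c, (r, c) ∈ μ → ∀ m, f r c = m + 1 ↔ u m = some r ∧ c = cnt u m r := by
    intro r c hm m
    have a := hf r c hm m
    have b := hf r c hm (m + 1)
    rw [cnt_succ] at b
    by_cases h : u m = some r
    · have hi : ind (u m) r = 1 := by simp [ind, h]
      simp only [h, true_and]
      omega
    · have hi : ind (u m) r = 0 := by simp [ind, h]
      simp only [h, false_and, iff_false]
      omega
  let T : SemistandardYoungTableau μ :=
    { entry := fun r c => if (r, c) ∈ μ then f r c else 0
      row_weak' := by
        intro i j1 j2 hj hm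
        have hm' : (i, j1) ∈ μ := μ.up_left_mem le_rfl hj.le hm
        simp only [hm, hm', if_true]
        rw [hf i j1 hm']
        have := (hf i j2 hm _).1 le_rfl
        omega
      col_strict' := by
        intro i1 i2 j hi hm
        have hm' : (i1, j) ∈ μ := μ.up_left_mem hi.le le_rfl hm
        simp only [hm, hm', if_true]
        have h0 := fpos i2 j hm
        obtain ⟨m, hfm⟩ : ∃ m, f i2 j = m + 1 := ⟨f i2 j - 1, by omega⟩
        rw [hfm, Nat.lt_succ_iff, hf i1 j hm']
        have h1 := (hf i2 j hm (m + 1)).1 (by omega)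
        have h2 := ((feq i2 j hm m).1 hfm).1
        have h3 := anti (m + 1) hi.le
        rw [cnt_succ u m i1] at h3
        have hi : ind (u m) i1 = 0 := by
          simp only [ind, h2, Option.some_inj]
          rw [if_neg]; omega
        omega
      zeros' := by
        intro i j hm
        simp [hm] }
  have hTf : ∀ r c, (r, c) ∈ μ → T r c = f r c := by
    intro r c hm
    change (if (r, c) ∈ μ then f r c else 0) = _
    rw [if_pos hm]
  have cell : ∀ k r, u k = some r → (r, cnt u k r) ∈ μ := by
    intro k r h
    have hk : k + 1 ≤ n := by
      by_contra hk
      have := (hu.none_iff k).2 (by omega)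
      rw [h] at this
      simp at this
    rw [YoungDiagram.mem_iff_lt_rowLen, ← hc]
    have h1 := cnt_mono u r hk
    simp only [cnt_succ] at h1
    have hi : ind (u k) r = 1 := by simp [ind, h]
    omega
  refine ⟨T, ?_, ?_⟩
  · intro k hk
    rw [Finset.mem_Icc] at hk
    obtain ⟨m, rfl⟩ : ∃ m, k = m + 1 := ⟨k - 1, by omega⟩
    have : ∃ r, u m = some r := by
      rw [← Option.ne_none_iff_exists', Ne, hu.none_iff]
      omega
    obtain ⟨r, hr⟩ := this
    rw [Finset.card_eq_one]
    refine ⟨(r, cnt u m r), ?_⟩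
    ext ⟨a, b⟩
    rw [Finset.mem_filter, Finset.mem_singleton]
    constructor
    · rintro ⟨h1, h2⟩
      simp only at h2
      rw [hTf a b h1, feq a b h1, hr, Option.some_inj] at h2
      obtain ⟨rfl, rfl⟩ := h2
      rfl
    · intro h
      rw [Prod.mk.injEq] at h
      obtain ⟨rfl, rfl⟩ := h
      have hcell := cell m a hr
      refine ⟨hcell, ?_⟩
      simp only
      rw [hTf _ _ hcell, feq _ _ hcell]
      exact ⟨hr, rfl⟩
  · intro k r
    constructor
    · intro h
      have hcell := cell k r h
      exact ⟨_, hcell, by rw [hTf _ _ hcell, feq _ _ hcell]; exact ⟨h, rfl⟩⟩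
    · rintro ⟨c, hm, e⟩
      rw [hTf _ _ hm, feq _ _ hm] at e
      exact e.1

/-- Words of given shape and descent set. -/
def WSet (n : ℕ) (μ : YoungDiagram) (I : Finset ℕ) : Type :=
  {u : ℕ → Option ℕ // IsW n u ∧ cnt u n = μ.rowLen ∧ wDes n u = I}

lemma dCoef_eq (hμ : μ.cells.card = n) (I : Finset ℕ) :
    dCoef μ n I = Nat.card (WSet n μ I) := by
  unfold dCoef
  refine Nat.card_eq_of_bijective
    (fun T => (⟨wd T.1, wd_isW T.1 hμ T.2.1, wd_shape T.1 hμ T.2.1,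
      (wd_des T.1 hμ T.2.1).trans T.2.2⟩ : WSet n μ I)) ⟨?_, ?_⟩
  · intro T T' h
    have h := congrArg Subtype.val h
    exact Subtype.ext (wd_inj T.1 T'.1 hμ T.2.1 T'.2.1 h)
  · rintro ⟨u, hu, hc, hd⟩
    obtain ⟨T, hT, h⟩ := wd_surj u hu hc
    have e : wd T = u := by
      funext k
      apply Option.ext
      intro r
      rw [wd_iff T hμ hT, h]
    refine ⟨⟨T, hT, ?_⟩, Subtype.ext e⟩
    rw [← wd_des T hμ hT, e, hd]

end Tableaux


/-! ### Partitions -/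

lemma card_le_sum_of_pos (s : Multiset ℕ) (h : ∀ a ∈ s, 0 < a) : s.card ≤ s.sum := by
  induction s using Multiset.induction with
  | empty => simp
  | cons a s ih =>
    rw [Multiset.card_cons, Multiset.sum_cons]
    have := h a (Multiset.mem_cons_self a s)
    have := ih fun b hb => h b (Multiset.mem_cons_of_mem hb)
    omega

lemma filter_card_le {n : ℕ} (p : n.Partition) (j : ℕ) :
    (p.parts.filter fun a => j < a).card ≤ n := by
  have h1 := card_le_sum_of_pos p.parts (fun a h => p.parts_pos h)
  rw [p.parts_sum] at h1
  exact (Multiset.card_le_card (Multiset.filter_le _ _)).trans h1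

lemma part_le {n : ℕ} (p : n.Partition) (a : ℕ) (h : a ∈ p.parts) : a ≤ n := by
  have := Multiset.le_sum_of_mem h
  rwa [p.parts_sum] at this

lemma mem_toYD {n : ℕ} (p : n.Partition) (i j : ℕ) :
    (i, j) ∈ toYD p ↔ i < (p.parts.filter fun a => j < a).card := by
  change (i, j) ∈ (toYD p).cells ↔ _
  simp only [toYD, Finset.mem_filter, Finset.mem_product, Finset.mem_range]
  constructor
  · exact fun h => h.2
  · intro h
    refine ⟨⟨lt_of_lt_of_le h (filter_card_le p j), ?_⟩, h⟩
    have h0 : 0 < (p.parts.filter fun a => j < a).card := by omega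
    obtain ⟨a, ha⟩ := Multiset.card_pos_iff_exists_mem.1 h0
    rw [Multiset.mem_filter] at ha
    exact lt_of_lt_of_le ha.2 (part_le p a ha.1)

lemma sum_filter_card (n : ℕ) (s : Multiset ℕ) (h : ∀ a ∈ s, a ≤ n) :
    ∑ j ∈ Finset.range n, (s.filter fun a => j < a).card = s.sum := by
  induction s using Multiset.induction with
  | empty => simp
  | cons a s ih =>
    rw [Multiset.sum_cons, ← ih fun b hb => h b (Multiset.mem_cons_of_mem hb)]
    have ha := h a (Multiset.mem_cons_self a s)
    have e : ∑ j ∈ Finset.range n, (if j < a then 1 else 0) = a := by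
      rw [← Finset.card_filter]
      have : (Finset.range n).filter (fun j => j < a) = Finset.range a := by
        ext j; simp only [Finset.mem_filter, Finset.mem_range]; omega
      rw [this, Finset.card_range]
    conv_rhs => rw [← e]
    rw [← Finset.sum_add_distrib]
    apply Finset.sum_congr rfl
    intro j _
    by_cases hj : j < a
    · rw [Multiset.filter_cons_of_pos _ hj, if_pos hj, Multiset.card_cons, add_comm]
    · rw [Multiset.filter_cons_of_neg _ hj, if_neg hj, zero_add]

lemma toYD_card {n : ℕ} (p : n.Partition) : (toYD p).cells.card = n := by
  simp only [toYD]
  rw [Finset.card_filter, Finset.sum_product_right]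
  have : ∀ j ∈ Finset.range n, (∑ i ∈ Finset.range n,
      if i < (p.parts.filter fun a => j < a).card then 1 else 0) =
      (p.parts.filter fun a => j < a).card := by
    intro j _
    have hle := filter_card_le p j
    rw [← Finset.card_filter]
    have : (Finset.range n).filter (fun i => i < (p.parts.filter fun a => j < a).card) =
        Finset.range (p.parts.filter fun a => j < a).card := by
      ext i; simp only [Finset.mem_filter, Finset.mem_range]; omega
    rw [this, Finset.card_range]
  rw [Finset.sum_congr rfl this, sum_filter_card n p.parts (part_le p), p.parts_sum]

lemma toYD_inj {n : ℕ} (p p' : n.Partition) (h : (toYD p).rowLen = (toYD p').rowLen) : p = p' := by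
  have hN : ∀ j, (p.parts.filter fun a => j < a).card = (p'.parts.filter fun a => j < a).card := by
    intro j
    apply eq_of_forall_lt_iff
    intro i
    rw [← mem_toYD, ← mem_toYD, YoungDiagram.mem_iff_lt_rowLen, YoungDiagram.mem_iff_lt_rowLen, h]
  have hc : ∀ (s : Multiset ℕ) (a : ℕ), (s.filter fun b => a < b).card =
      s.count (a + 1) + (s.filter fun b => a + 1 < b).card := by
    intro s a
    induction s using Multiset.induction with
    | empty => simp
    | cons b s ih =>
      simp only [Multiset.filter_cons, Multiset.count_cons, Multiset.card_add, ih]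
      split_ifs <;> simp <;> omega
  apply Nat.Partition.ext
  ext a
  rcases a with _ | a
  · rw [Multiset.count_eq_zero_of_notMem, Multiset.count_eq_zero_of_notMem]
    · exact fun h => absurd (p'.parts_pos h) (by omega)
    · exact fun h => absurd (p.parts_pos h) (by omega)
  · have a1 := hc p.parts a
    have a2 := hc p'.parts a
    have a3 := hN a
    have a4 := hN (a + 1)
    omega

lemma exists_partition (n : ℕ) (u : ℕ → Option ℕ) (hu : IsW n u) :
    ∃ p : n.Partition, cnt u n = (toYD p).rowLen := by
  obtain ⟨R, hR⟩ : ∃ R, ∀ k < n, ∀ r, u k = some r → r < R := by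
    refine ⟨(Finset.range n).sup (fun k => (u k).getD 0) + 1, ?_⟩
    intro k hk r hr
    have := Finset.le_sup (f := fun k => (u k).getD 0) (Finset.mem_range.2 hk)
    simp only [hr, Option.getD_some] at this
    omega
  have anti : Antitone (cnt u n) := antitone_nat_of_succ_le (hu.lat n)
  have hz : ∀ r, R ≤ r → cnt u n r = 0 := by
    intro r hr
    apply Finset.sum_eq_zero
    intro k hk
    rw [Finset.mem_range] at hk
    simp only [ind]
    rw [if_neg]
    intro h
    have := hR k hk r h
    omega
  have hsum : ((Multiset.range R).map (cnt u n)).sum = n := by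
    change ∑ r ∈ Finset.range R, cnt u n r = n
    simp only [cnt]
    rw [Finset.sum_comm]
    rw [Finset.sum_congr rfl (g := fun _ => 1)]
    · simp
    · intro k hk
      rw [Finset.mem_range] at hk
      have : ∃ r, u k = some r := by
        rw [← Option.ne_none_iff_exists', Ne, hu.none_iff]
        omega
      obtain ⟨r, hr⟩ := this
      simp only [hr, ind_some]
      rw [Finset.sum_ite_eq, if_pos]
      exact Finset.mem_range.2 (hR k hk r hr)
  refine ⟨Nat.Partition.ofSums n _ hsum, ?_⟩
  have hcard : ∀ j, ((Nat.Partition.ofSums n _ hsum).parts.filter fun a => j < a).card =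
      ((Finset.range R).filter fun r => j < cnt u n r).card := by
    intro j
    simp only [Nat.Partition.ofSums]
    rw [Multiset.filter_filter, Multiset.filter_map, Multiset.card_map]
    change _ = (Multiset.filter _ (Multiset.range R)).card
    congr 1
    apply Multiset.filter_congr
    intro r _
    simp only [Function.comp]
    constructor
    · exact fun h => h.1
    · exact fun h => ⟨h, by omega⟩
  funext i
  apply eq_of_forall_lt_iff
  intro j
  rw [← YoungDiagram.mem_iff_lt_rowLen, mem_toYD, hcard]
  constructor
  · intro h
    have : Finset.range (i + 1) ⊆ (Finset.range R).filter fun r => j < cnt u n r := by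
      intro r hr
      rw [Finset.mem_range] at hr
      have h1 := anti (show r ≤ i by omega)
      rw [Finset.mem_filter, Finset.mem_range]
      refine ⟨?_, by omega⟩
      by_contra hc
      have := hz r (by omega)
      omega
    have := Finset.card_le_card this
    rw [Finset.card_range] at this
    omega
  · intro h
    by_contra hc
    have : ((Finset.range R).filter fun r => j < cnt u n r) ⊆ Finset.range i := by
      intro r hr
      rw [Finset.mem_filter] at hr
      rw [Finset.mem_range]
      by_contra hri
      have := anti (show i ≤ r by omega)
      omega
    have := Finset.card_le_card this
    rw [Finset.card_range] at this
    omega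

/-- The shape of a permutation. -/
def shp {n : ℕ} (σ : Equiv.Perm (Fin n)) : n.Partition :=
  (exists_partition n (top σ) (isW_top σ)).choose

lemma shp_spec {n : ℕ} (σ : Equiv.Perm (Fin n)) : cnt (top σ) n = (toYD (shp σ)).rowLen :=
  (exists_partition n (top σ) (isW_top σ)).choose_spec

/-- The pairs counted by the theorem. -/
abbrev PairSet (n : ℕ) (I J : Finset ℕ) : Type :=
  {st : Equiv.Perm (Fin n) × Equiv.Perm (Fin n) //
        st.1 * st.2 = 1 ∧ permDes st.1 = I ∧ permDes st.2 = J}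

lemma fiber_card (n : ℕ) (I J : Finset ℕ) (p : n.Partition) :
    Nat.card {a : PairSet n I J // shp a.1.1 = p} =
      Nat.card (WSet n (toYD p) I × WSet n (toYD p) J) := by
  have inv : ∀ a : PairSet n I J, a.1.2 = a.1.1⁻¹ := fun a => eq_inv_of_mul_eq_one_right a.2.1
  refine Nat.card_eq_of_bijective
    (fun a => ((⟨top a.1.1.1, isW_top _, by rw [shp_spec, a.2],
      (wDes_top _).trans a.1.2.2.1⟩ : WSet n (toYD p) I),
      (⟨top a.1.1.2, isW_top _, by rw [inv, cnt_top_inv, shp_spec, a.2],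
      (wDes_top _).trans a.1.2.2.2⟩ : WSet n (toYD p) J))) ⟨?_, ?_⟩
  · intro a b h
    have h1 : top a.1.1.1 = top b.1.1.1 := congrArg (fun z => z.1.1) h
    have h2 : top a.1.1.2 = top b.1.1.2 := congrArg (fun z => z.2.1) h
    rw [inv, inv] at h2
    have e := top_inj _ _ h1 h2
    apply Subtype.ext
    apply Subtype.ext
    apply Prod.ext
    · exact e
    · rw [inv, inv, e]
  · rintro ⟨⟨q, hq, cq, dq⟩, ⟨w, hw, cw, dw⟩⟩
    obtain ⟨σ, h1, h2⟩ := top_surj n q w hq hw (cq.trans cw.symm)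
    refine ⟨⟨⟨(σ, σ⁻¹), mul_inv_cancel σ, ?_, ?_⟩, ?_⟩, ?_⟩
    · rw [← wDes_top, h1, dq]
    · rw [← wDes_top, h2, dw]
    · apply toYD_inj
      rw [← shp_spec, h1, cq]
    · exact Prod.ext (Subtype.ext h1) (Subtype.ext h2)


/-- The number of pairs `(σ, τ)` of permutations of `S_n` with `στ = id`,
`Des(σ) = I` and `Des(τ) = J` is `Σ_{λ ⊢ n} d_{λ,I} d_{λ,J}`. -/
theorem stmt6 (n : ℕ) (hn : 1 ≤ n) (I J : Finset ℕ) :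
    Nat.card {st : Equiv.Perm (Fin n) × Equiv.Perm (Fin n) //
        st.1 * st.2 = 1 ∧ permDes st.1 = I ∧ permDes st.2 = J} =
      ∑ p : n.Partition, dCoef (toYD p) n I * dCoef (toYD p) n J := by

  rw [Nat.card_congr (Equiv.sigmaFiberEquiv (fun a : PairSet n I J => shp a.1.1)).symm,
    Nat.card_sigma]
  refine Finset.sum_congr rfl fun p _ => ?_
  rw [dCoef_eq (toYD_card p), dCoef_eq (toYD_card p), ← Nat.card_prod]
  exact fiber_card n I J p
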